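/- For any two matrices A, B ∈ Mₙ(ℂ) there exists a unitary U ∈ Mₙ(ℂ) such that |AB*| ≤ U ((|A|² + |B|²)/2) U*. (Bhatia–Kittaneh inequality) -/

import Mathlib

open scoped Matrix ComplexOrder

/-- `A^p` for a matrix, via continuous functional calculus with the real power function. -/
noncomputable def mpow {n : ℕ} (A : Matrix (Fin n) (Fin n) ℂ) (p : ℝ) : Matrix (Fin n) (Fin n) ℂ :=
  cfc (fun x : ℝ => x ^ p) A

/-- Matrix absolute value `|X| = (XᴴX)^{1/2}`. -/
noncomputable def matAbs {n : ℕ} (X : Matrix (Fin n) (Fin n) ℂ) : Matrix (Fin n) (Fin n) ℂ :=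
  cfc Real.sqrt (Xᴴ * X)

/-- Loewner order: `X ≤ Y` iff `Y - X` is positive semidefinite. -/
def loewnerLE {n : ℕ} (X Y : Matrix (Fin n) (Fin n) ℂ) : Prop := (Y - X).PosSemidef

/-!
If `Xᴴ * X = Yᴴ * Y` then `Y x ↦ X x` is an isometry between the ranges and extends to a unitary.
This gives the polar decomposition, and hence that `X * Xᴴ` and `Xᴴ * X` are unitarily similar.
Polar decomposition turns `|A * Bᴴ|` into `Sᴴ * T` with `S * Sᴴ = |A| ^ 2` and `T * Tᴴ = |B| ^ 2`,
and being Hermitian it equals the mean of `Sᴴ * T` and `Tᴴ * S`. The two polarization identities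
* `2 (Sᴴ T + Tᴴ S) = (S + T)ᴴ (S + T) - (S - T)ᴴ (S - T)`,
* `2 (S Sᴴ + T Tᴴ) = (S + T) (S + T)ᴴ + (S - T) (S - T)ᴴ`

then give the inequality, with the unitary that conjugates `(S + T) (S + T)ᴴ`
into `(S + T)ᴴ (S + T)`.
-/

open scoped MatrixOrder

theorem exists_linearIsometryEquiv_apply_eq_of_norm_eq {𝕜 V F : Type*} [RCLike 𝕜]
    [AddCommGroup V] [Module 𝕜 V] [NormedAddCommGroup F] [InnerProductSpace 𝕜 F]
    [FiniteDimensional 𝕜 F] {S T : V →ₗ[𝕜] F} (h : ∀ x, ‖S x‖ = ‖T x‖) :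
    ∃ U : F ≃ₗᵢ[𝕜] F, ∀ x, S x = U (T x) := by
  obtain ⟨g, hg⟩ := T.rangeRestrict.exists_rightInverse_of_surjective T.range_rangeRestrict
  have apply_g (y : T.range) : T (g y) = y := congrArg Subtype.val (LinearMap.congr_fun hg y)
  let L : T.range →ₗᵢ[𝕜] F := ⟨S ∘ₗ g, fun y ↦ by
    rw [LinearMap.comp_apply, h, apply_g, Submodule.coe_norm]⟩
  have apply_eq (x : V) : S x = L (T.rangeRestrict x) := by
    rw [← sub_eq_zero, ← norm_eq_zero]
    calc ‖S x - S (g (T.rangeRestrict x))‖ = ‖T x - T (g (T.rangeRestrict x))‖ := by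
          rw [← map_sub, h, map_sub]
      _ = 0 := by
        rw [apply_g, LinearMap.rangeRestrict, LinearMap.codRestrict_apply, sub_self, norm_zero]
  exact ⟨L.extend.toLinearIsometryEquiv rfl, fun x ↦
    (apply_eq x).trans (L.extend_apply (T.rangeRestrict x)).symm⟩

theorem exists_linearIsometryEquiv_apply_eq_of_gram_eq {𝕜 F ι : Type*} [RCLike 𝕜]
    [NormedAddCommGroup F] [InnerProductSpace 𝕜 F] [FiniteDimensional 𝕜 F] {v w : ι → F}
    (h : Matrix.gram 𝕜 v = Matrix.gram 𝕜 w) : ∃ U : F ≃ₗᵢ[𝕜] F, ∀ i, v i = U (w i) := by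
  have inner_eq (i j : ι) : inner 𝕜 (v i) (v j) = inner 𝕜 (w i) (w j) := congrFun₂ h i j
  have norm_eq (c : ι →₀ 𝕜) :
      ‖Finsupp.linearCombination 𝕜 v c‖ = ‖Finsupp.linearCombination 𝕜 w c‖ := by
    rw [← sq_eq_sq₀ (norm_nonneg _) (norm_nonneg _), ← inner_self_eq_norm_sq (𝕜 := 𝕜),
      ← inner_self_eq_norm_sq (𝕜 := 𝕜)]
    simp only [Finsupp.linearCombination_apply, Finsupp.sum, sum_inner, inner_sum,
      inner_smul_left, inner_smul_right, inner_eq]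
  obtain ⟨U, hU⟩ := exists_linearIsometryEquiv_apply_eq_of_norm_eq norm_eq
  refine ⟨U, fun i ↦ ?_⟩
  simpa only [Finsupp.linearCombination_single, one_smul] using hU (Finsupp.single i 1)

section Matrix

open Matrix

variable {𝕜 n : Type*} [RCLike 𝕜] [Fintype n] [DecidableEq n]

theorem gram_toLp_col {m ι : Type*} [Fintype m] (M : Matrix m ι 𝕜) :
    gram 𝕜 (fun j ↦ WithLp.toLp 2 (M.col j)) = Mᴴ * M :=
  gram_eq_conjTranspose_mul (EuclideanSpace.basisFun m 𝕜) _

theorem exists_unitary_toEuclideanLin_apply_eq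
    (U : EuclideanSpace 𝕜 n ≃ₗᵢ[𝕜] EuclideanSpace 𝕜 n) :
    ∃ W ∈ unitaryGroup n 𝕜, ∀ x, toEuclideanLin W x = U x := by
  let e := (toEuclideanCLM (n := n) (𝕜 := 𝕜)).symm
  let V := Unitary.linearIsometryEquiv.symm U
  refine ⟨e V, Unitary.map_mem e V.2, fun x ↦ ?_⟩
  rw [← coe_toEuclideanCLM_eq_toEuclideanLin]
  simp [e, V]

theorem exists_unitary_mul_eq_of_conjTranspose_mul_self_eq {ι : Type*} {M N : Matrix n ι 𝕜}
    (h : Mᴴ * M = Nᴴ * N) : ∃ U ∈ unitaryGroup n 𝕜, M = U * N := by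
  rw [← gram_toLp_col, ← gram_toLp_col] at h
  obtain ⟨V, hV⟩ := exists_linearIsometryEquiv_apply_eq_of_gram_eq h
  obtain ⟨U, hU, hUV⟩ := exists_unitary_toEuclideanLin_apply_eq V
  refine ⟨U, hU, ext_col fun j ↦ WithLp.toLp_injective 2 ?_⟩
  rw [hV, ← hUV]
  rfl

theorem conjTranspose_abs (X : Matrix n n 𝕜) : (CFC.abs X)ᴴ = CFC.abs X :=
  (CFC.abs_nonneg X).isSelfAdjoint

theorem sq_abs_eq_conjTranspose_mul_self (X : Matrix n n 𝕜) : CFC.abs X ^ 2 = Xᴴ * X := by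
  rw [sq, CFC.abs_mul_abs, star_eq_conjTranspose]

theorem exists_unitary_mul_eq_abs (X : Matrix n n 𝕜) :
    ∃ U ∈ unitaryGroup n 𝕜, U * X = CFC.abs X := by
  have gram_eq : (CFC.abs X)ᴴ * CFC.abs X = Xᴴ * X := by
    rw [conjTranspose_abs, ← sq, sq_abs_eq_conjTranspose_mul_self]
  obtain ⟨U, hU, hX⟩ := exists_unitary_mul_eq_of_conjTranspose_mul_self_eq gram_eq
  exact ⟨U, hU, hX.symm⟩

theorem exists_unitary_conj_mul_conjTranspose_eq (X : Matrix n n 𝕜) :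
    ∃ U ∈ unitaryGroup n 𝕜, U * (X * Xᴴ) * Uᴴ = Xᴴ * X := by
  obtain ⟨U, hU, hX⟩ := exists_unitary_mul_eq_abs X
  refine ⟨U, hU, ?_⟩
  calc U * (X * Xᴴ) * Uᴴ = (U * X) * (U * X)ᴴ := by simp only [conjTranspose_mul, mul_assoc]
    _ = Xᴴ * X := by rw [hX, conjTranspose_abs, ← sq, sq_abs_eq_conjTranspose_mul_self]

theorem exists_unitary_conjTranspose_mul_add_le (S T : Matrix n n 𝕜) :
    ∃ U ∈ unitaryGroup n 𝕜, Sᴴ * T + Tᴴ * S ≤ U * (S * Sᴴ + T * Tᴴ) * Uᴴ := by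
  obtain ⟨U, hU, hUST⟩ := exists_unitary_conj_mul_conjTranspose_eq (S + T)
  refine ⟨U, hU, le_of_smul_le_smul_left (a := (2 : ℝ)) ?_ two_pos⟩
  calc (2 : ℝ) • (Sᴴ * T + Tᴴ * S)
      = (S + T)ᴴ * (S + T) - (S - T)ᴴ * (S - T) := by
        simp only [conjTranspose_add, conjTranspose_sub, two_smul]
        noncomm_ring
    _ ≤ U * ((S + T) * (S + T)ᴴ) * Uᴴ := by
        rw [hUST]
        exact sub_le_self _ (star_mul_self_nonneg (S - T))
    _ ≤ U * ((S + T) * (S + T)ᴴ + (S - T) * (S - T)ᴴ) * Uᴴ :=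
        star_right_conjugate_le_conjugate (le_add_of_nonneg_right (mul_star_self_nonneg (S - T))) U
    _ = (2 : ℝ) • (U * (S * Sᴴ + T * Tᴴ) * Uᴴ) := by
        simp only [conjTranspose_add, conjTranspose_sub, two_smul]
        noncomm_ring

theorem exists_unitary_conjTranspose_mul_le {S T : Matrix n n 𝕜} (h : (Sᴴ * T).IsHermitian) :
    ∃ U ∈ unitaryGroup n 𝕜, Sᴴ * T ≤ U * ((2 : 𝕜)⁻¹ • (S * Sᴴ + T * Tᴴ)) * Uᴴ := by
  obtain ⟨U, hU, hle⟩ := exists_unitary_conjTranspose_mul_add_le S T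
  have conjTranspose_mul_comm : Tᴴ * S = Sᴴ * T := by simpa [IsHermitian] using h
  refine ⟨U, hU, ?_⟩
  calc Sᴴ * T = (2 : 𝕜)⁻¹ • (Sᴴ * T + Tᴴ * S) := by
        rw [conjTranspose_mul_comm, ← two_smul 𝕜, inv_smul_smul₀ two_ne_zero]
    _ ≤ (2 : 𝕜)⁻¹ • (U * (S * Sᴴ + T * Tᴴ) * Uᴴ) :=
        smul_le_smul_of_nonneg_left hle (by positivity)
    _ = U * ((2 : 𝕜)⁻¹ • (S * Sᴴ + T * Tᴴ)) * Uᴴ := by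
        rw [Matrix.mul_smul, Matrix.smul_mul]

theorem bhatia_kittaneh_general (A B : Matrix n n 𝕜) :
    ∃ U ∈ unitaryGroup n 𝕜, CFC.abs (A * Bᴴ) ≤
      U * ((2 : 𝕜)⁻¹ • (CFC.abs A ^ 2 + CFC.abs B ^ 2)) * Uᴴ := by
  obtain ⟨W, hW, polar⟩ := exists_unitary_mul_eq_abs (A * Bᴴ)
  have conjTranspose_mul_eq_abs : (Aᴴ * Wᴴ)ᴴ * Bᴴ = CFC.abs (A * Bᴴ) := by
    rw [conjTranspose_mul, conjTranspose_conjTranspose, conjTranspose_conjTranspose, mul_assoc,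
      polar]
  have mul_conjTranspose_eq_sq_abs : Aᴴ * Wᴴ * (Aᴴ * Wᴴ)ᴴ = CFC.abs A ^ 2 := by
    have hWW : Wᴴ * W = 1 := mem_unitaryGroup_iff'.mp hW
    calc Aᴴ * Wᴴ * (Aᴴ * Wᴴ)ᴴ = Aᴴ * (Wᴴ * W) * A := by
          simp only [conjTranspose_mul, conjTranspose_conjTranspose, mul_assoc]
      _ = CFC.abs A ^ 2 := by rw [hWW, mul_one, sq_abs_eq_conjTranspose_mul_self]
  have hermitian : ((Aᴴ * Wᴴ)ᴴ * Bᴴ).IsHermitian :=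
    conjTranspose_mul_eq_abs ▸ conjTranspose_abs (A * Bᴴ)
  simpa only [conjTranspose_mul_eq_abs, mul_conjTranspose_eq_sq_abs, conjTranspose_conjTranspose,
    ← sq_abs_eq_conjTranspose_mul_self B] using exists_unitary_conjTranspose_mul_le hermitian

end Matrix

theorem matAbs_eq_abs {n : ℕ} (X : Matrix (Fin n) (Fin n) ℂ) : matAbs X = CFC.abs X := by
  rw [CFC.abs, CFC.sqrt_eq_real_sqrt _ (star_mul_self_nonneg X), cfcₙ_eq_cfc, matAbs,
    Matrix.star_eq_conjTranspose]

/-- Bhatia–Kittaneh inequality: for any `A, B` there is a unitary `U` with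
`|AB*| ≤ U ((|A|² + |B|²)/2) U*`. -/
theorem bhatia_kittaneh {n : ℕ} (A B : Matrix (Fin n) (Fin n) ℂ) :
    ∃ U : Matrix (Fin n) (Fin n) ℂ, U ∈ Matrix.unitaryGroup (Fin n) ℂ ∧
      loewnerLE (matAbs (A * Bᴴ)) (U * ((2 : ℂ)⁻¹ • (matAbs A ^ 2 + matAbs B ^ 2)) * Uᴴ) := by
  simpa only [loewnerLE, matAbs_eq_abs, ← Matrix.le_iff] using bhatia_kittaneh_general A B
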